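/- Let V be a subspace of the space of infinitely differentiable functions from ℝ to ℂ that is invariant under differentiation (for every y ∈ V, the derivative y′ belongs to V), let λ be a complex number, let l be a positive integer, and suppose V contains a function of the form t ↦ p(t) · exp(λt) where p is a polynomial with complex coefficients of degree exactly l − 1. Then H_{λ,l} ⊆ V. -/

import Mathlib

/-!
Since `(exp (c t) q)' - c exp (c t) q = exp (c t) q'`, the polynomials `q` with `exp (c t) q ∈ V`
form a subspace closed under `Polynomial.derivative`. In characteristic zero the iterated
derivatives of a polynomial of degree `n` realise every degree from `n` down to `0`, so they span
all polynomials of degree at most `n`.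
-/

open Polynomial

/-- The linear map sending a polynomial `p` to the function `t ↦ exp (c t) * p t`. -/
noncomputable def funOfPoly (c : ℂ) : Polynomial ℂ →ₗ[ℂ] (ℝ → ℂ) where
  toFun p := fun t => Complex.exp (c * t) * p.eval (t : ℂ)
  map_add' p q := by funext t; simp [mul_add]
  map_smul' a p := by funext t; simp; ring

/-- `H c m` is the space of functions `t ↦ exp (c t) * p t` with `p` a polynomial of degree `< m`. -/
noncomputable def H (c : ℂ) (m : ℕ) : Submodule ℂ (ℝ → ℂ) :=
  (Polynomial.degreeLT ℂ m).map (funOfPoly c)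

section Polynomial

theorem degree_iterate_derivative {R : Type*} [Semiring R] [IsAddTorsionFree R] {p : R[X]}
    (hp : p ≠ 0) {k : ℕ} (hk : k ≤ p.natDegree) :
    (derivative^[k] p).degree = (p.natDegree - k : ℕ) := by
  induction k with
  | zero => exact degree_eq_natDegree hp
  | succ k ih =>
    have hnat : (derivative^[k] p).natDegree = p.natDegree - k :=
      natDegree_eq_of_degree_eq_some (ih (by lia))
    rw [Function.iterate_succ_apply', degree_derivative (by lia), hnat, Nat.sub_sub]

theorem degreeLT_le_of_forall_exists_degree_eq {K : Type*} [DivisionRing K]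
    {W : Submodule K K[X]} {n : ℕ} (hW : ∀ i < n, ∃ q ∈ W, q.degree = i) :
    degreeLT K n ≤ W := by
  -- `Polynomial.Sequence` asks for a member of every degree; those of degree `≥ n` play no role.
  have hex : ∀ i : ℕ, ∃ q : K[X], q.degree = i ∧ (i < n → q ∈ W) := fun i ↦ by
    by_cases hi : i < n
    · obtain ⟨q, hqW, hq⟩ := hW i hi
      exact ⟨q, hq, fun _ ↦ hqW⟩
    · exact ⟨X ^ i, degree_X_pow i, fun h ↦ absurd h hi⟩
  choose q hdeg hmem using hex
  let S : Polynomial.Sequence K := ⟨q, hdeg⟩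
  rw [← S.span_degreeLT fun i _ ↦ (leadingCoeff_ne_zero.2 (S.ne_zero i)).isUnit, Submodule.span_le]
  exact Set.image_subset_iff.2 hmem

theorem degreeLT_natDegree_succ_le_of_derivative_mem {K : Type*} [DivisionRing K] [CharZero K]
    {W : Submodule K K[X]} (hW : ∀ q ∈ W, derivative q ∈ W) {p : K[X]} (hp : p ≠ 0)
    (hpW : p ∈ W) : degreeLT K (p.natDegree + 1) ≤ W :=
  degreeLT_le_of_forall_exists_degree_eq fun i hi ↦
    have hmaps : Set.MapsTo derivative (W : Set K[X]) W := hW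
    ⟨derivative^[p.natDegree - i] p, hmaps.iterate _ hpW, by
      rw [degree_iterate_derivative hp (Nat.sub_le _ _), Nat.sub_sub_self (Nat.le_of_lt_succ hi)]⟩

end Polynomial

section ExponentialPolynomial

variable (c : ℂ) (q : ℂ[X])

theorem contDiff_funOfPoly {n : WithTop ℕ∞} : ContDiff ℝ n (funOfPoly c q) := by
  have hexp : ContDiff ℝ n fun t : ℝ ↦ Complex.exp (c * t) :=
    (contDiff_const.mul Complex.ofRealCLM.contDiff).cexp
  have heval : ContDiff ℝ n fun t : ℝ ↦ q.eval (t : ℂ) :=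
    (q.contDiff_aeval n).restrict_scalars ℝ |>.comp Complex.ofRealCLM.contDiff
  exact hexp.mul heval

theorem hasDerivAt_funOfPoly (t : ℝ) :
    HasDerivAt (funOfPoly c q) (c * funOfPoly c q t + funOfPoly c (derivative q) t) t := by
  have hexp : HasDerivAt (fun z : ℂ ↦ Complex.exp (c * z)) (Complex.exp (c * t) * c) t :=
    (hasDerivAt_const_mul c).cexp
  refine ((hexp.mul (q.hasDerivAt (t : ℂ))).comp_ofReal).congr_deriv ?_
  simp only [funOfPoly, LinearMap.coe_mk, AddHom.coe_mk]
  ring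

theorem deriv_funOfPoly :
    deriv (funOfPoly c q) = c • funOfPoly c q + funOfPoly c (derivative q) :=
  funext fun t ↦ (hasDerivAt_funOfPoly c q t).deriv

variable {c q} {V : Submodule ℂ (ℝ → ℂ)}

theorem funOfPoly_derivative_mem (hinv : ∀ y ∈ V, ContDiff ℝ (⊤ : ℕ∞) y → deriv y ∈ V)
    (hq : funOfPoly c q ∈ V) : funOfPoly c (derivative q) ∈ V := by
  have hderiv : deriv (funOfPoly c q) ∈ V := hinv _ hq (contDiff_funOfPoly c q)
  rw [deriv_funOfPoly] at hderiv
  exact (V.add_mem_iff_right (V.smul_mem c hq)).1 hderiv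

end ExponentialPolynomial

theorem stmt_12_general {V : Submodule ℂ (ℝ → ℂ)}
    (hinv : ∀ y ∈ V, ContDiff ℝ (⊤ : ℕ∞) y → deriv y ∈ V) {c : ℂ} {p : ℂ[X]} (hp : p ≠ 0)
    (hpV : (fun t : ℝ ↦ p.eval (t : ℂ) * Complex.exp (c * t)) ∈ V) :
    H c (p.natDegree + 1) ≤ V := by
  have hmem : funOfPoly c p ∈ V := by
    convert hpV using 2
    exact mul_comm _ _
  exact Submodule.map_le_iff_le_comap.2 <|
    degreeLT_natDegree_succ_le_of_derivative_mem (W := V.comap (funOfPoly c))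
      (fun _ ↦ funOfPoly_derivative_mem hinv) hp hmem

/-- A differentiation-invariant subspace of smooth functions containing `t ↦ p t * exp (c t)`
with `p` of degree exactly `l - 1` contains all of `H c l`. -/
theorem stmt_12 (V : Submodule ℂ (ℝ → ℂ)) (hsmooth : ∀ y ∈ V, ContDiff ℝ (⊤ : ℕ∞) y)
    (hinv : ∀ y ∈ V, deriv y ∈ V)
    (c : ℂ) (l : ℕ) (hl : 0 < l)
    (p : Polynomial ℂ) (hp : p.degree = ((l - 1 : ℕ) : WithBot ℕ))
    (hpV : (fun t : ℝ => p.eval (t : ℂ) * Complex.exp (c * t)) ∈ V) :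
    H c l ≤ V := by
  rw [← Nat.sub_add_cancel hl, ← natDegree_eq_of_degree_eq_some hp]
  exact stmt_12_general (fun y hy _ ↦ hinv y hy) (ne_zero_of_coe_le_degree hp.ge) hpV
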